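/- Let B_p(x,y) = ∫_{ℝ^d} e^{i⟨x−y,ξ⟩} b_p(ξ) dξ be the B-spline kernel on ℝ^d of even order p, where b_p(ξ) = (2π)^{−d} ∏_{j=1}^d (sin(ξ_j/2)/(ξ_j/2))^p, and let ℰ_σ(x,y) = exp(−‖x−y‖/σ) be the ℓ²-norm exponential kernel with parameter σ > 0, where ‖·‖ is the Euclidean norm. Then: (a) there is no λ ≥ 0 for which λB_p − ℰ_σ is a positive semidefinite kernel on ℝ^d; (b) there exists λ ≥ 0 for which λℰ_σ − B_p is a positive semidefinite kernel on ℝ^d if and only if p ≥ d+1; (c) if p ≥ d+1, then the least such λ is at most (2^{p−d}/(σ^d π^{(d−1)/2})) · (1+σ²d)^{(d+1)/2}/Γ((d+1)/2), where Γ is the Gamma function. -/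

import Mathlib

open MeasureTheory
open scoped ComplexOrder

/-- A function `K : X × X → ℂ` is a positive semidefinite kernel if every finite
quadratic form `∑ j, ∑ k, c j * conj (c k) * K (x j) (x k)` is a nonnegative real number. -/
def IsPSDKernel {X : Type*} (K : X → X → ℂ) : Prop :=
  ∀ (n : ℕ) (x : Fin n → X) (c : Fin n → ℂ),
    0 ≤ ∑ j, ∑ k, c j * (starRingEnd ℂ) (c k) * K (x j) (x k)

/-- The Fourier density `b_p(ξ) = (2π)^{−d} ∏_j (sin(ξ_j/2)/(ξ_j/2))^p` of the
B-spline kernel of order `p`. -/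
noncomputable def bsplineDensity (d p : ℕ) (ξ : EuclideanSpace ℝ (Fin d)) : ℝ :=
  (2 * Real.pi) ^ (-(d : ℤ)) *
    ∏ j, (if ξ j = 0 then 1 else Real.sin (ξ j / 2) / (ξ j / 2)) ^ p

/-- The B-spline kernel `B_p(x,y) = ∫_{ℝ^d} e^{i⟨x−y,ξ⟩} b_p(ξ) dξ` on `ℝ^d`. -/
noncomputable def bsplineK (d p : ℕ) (x y : EuclideanSpace ℝ (Fin d)) : ℂ :=
  ∫ ξ, Complex.exp (Complex.I * ((inner ℝ (x - y) ξ : ℝ) : ℂ)) * (bsplineDensity d p ξ : ℂ)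

/-- The `ℓ²`-norm exponential kernel `ℰ_σ(x,y) = exp(−‖x−y‖/σ)` on `ℝ^d`. -/
noncomputable def l2expK (d : ℕ) (σ : ℝ) (x y : EuclideanSpace ℝ (Fin d)) : ℂ :=
  ((Real.exp (-‖x - y‖ / σ) : ℝ) : ℂ)


lemma quad_form {d : ℕ} {f : EuclideanSpace ℝ (Fin d) → ℝ} (hf : Integrable f) (n : ℕ)
    (x : Fin n → EuclideanSpace ℝ (Fin d)) (c : Fin n → ℂ) :
    ∑ j, ∑ k, c j * (starRingEnd ℂ) (c k) *
      (∫ ξ, Complex.exp (Complex.I * ((inner ℝ (x j - x k) ξ : ℝ) : ℂ)) * (f ξ : ℂ)) =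
    ((∫ ξ, ‖∑ j, c j * Complex.exp (Complex.I * ((inner ℝ (x j) ξ : ℝ) : ℂ))‖ ^ 2 * f ξ : ℝ) : ℂ) := by
  have hint : ∀ y : EuclideanSpace ℝ (Fin d), Integrable (fun ξ =>
      Complex.exp (Complex.I * ((inner ℝ y ξ : ℝ) : ℂ)) * (f ξ : ℂ)) := by
    intro y
    refine (hf.ofReal (𝕜 := ℂ)).bdd_mul (c := 1) ?_ ?_
    · apply Continuous.aestronglyMeasurable
      fun_prop
    · filter_upwards with ξ
      rw [mul_comm, Complex.norm_exp_ofReal_mul_I]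
  rw [← integral_complex_ofReal]
  simp_rw [← integral_const_mul]
  rw [Finset.sum_congr rfl fun j _ => (integral_finsetSum Finset.univ
    fun k _ => (hint (x j - x k)).const_mul (c j * (starRingEnd ℂ) (c k))).symm]
  rw [← integral_finsetSum]
  swap
  · intro j _
    apply integrable_finsetSum
    intro k _
    exact (hint _).const_mul _
  · apply integral_congr_ae
    filter_upwards with ξ
    push_cast
    rw [← Complex.mul_conj', map_sum, Finset.sum_mul_sum, Finset.sum_mul]
    refine Finset.sum_congr rfl fun j _ => ?_
    rw [Finset.sum_mul]
    refine Finset.sum_congr rfl fun k _ => ?_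
    rw [map_mul, ← Complex.exp_conj, inner_sub_left]
    simp only [map_mul, Complex.conj_I, Complex.conj_ofReal, Complex.ofReal_sub]
    rw [mul_sub, sub_eq_add_neg, Complex.exp_add]
    ring_nf

lemma psd_of_nonneg {d : ℕ} {f : EuclideanSpace ℝ (Fin d) → ℝ} (hf : Integrable f)
    (h0 : ∀ ξ, 0 ≤ f ξ) :
    IsPSDKernel (fun x y : EuclideanSpace ℝ (Fin d) =>
      ∫ ξ, Complex.exp (Complex.I * ((inner ℝ (x - y) ξ : ℝ) : ℂ)) * (f ξ : ℂ)) := by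
  intro n x c
  rw [quad_form hf]
  rw [Complex.zero_le_real]
  exact integral_nonneg fun ξ => mul_nonneg (by positivity) (h0 ξ)

def TrigP {d : ℕ} (q : EuclideanSpace ℝ (Fin d) → ℂ) : Prop :=
  ∃ (n : ℕ) (x : Fin n → EuclideanSpace ℝ (Fin d)) (c : Fin n → ℂ),
    ∀ ξ, q ξ = ∑ j, c j * Complex.exp (Complex.I * ((inner ℝ (x j) ξ : ℝ) : ℂ))

lemma TrigP.mul {d : ℕ} {q r : EuclideanSpace ℝ (Fin d) → ℂ} (hq : TrigP q) (hr : TrigP r) :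
    TrigP (fun ξ => q ξ * r ξ) := by
  obtain ⟨n, x, c, h⟩ := hq
  obtain ⟨m, y, e, h'⟩ := hr
  refine ⟨n * m, fun i => x (finProdFinEquiv.symm i).1 + y (finProdFinEquiv.symm i).2,
    fun i => c (finProdFinEquiv.symm i).1 * e (finProdFinEquiv.symm i).2, fun ξ => ?_⟩
  beta_reduce
  rw [h, h', Finset.sum_mul_sum, ← Finset.sum_product', Finset.univ_product_univ,
    ← finProdFinEquiv.symm.sum_comp]
  refine Finset.sum_congr rfl fun i _ => ?_
  rw [inner_add_left]
  push_cast
  rw [mul_add, Complex.exp_add]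
  ring

lemma TrigP.one {d : ℕ} : TrigP (fun _ : EuclideanSpace ℝ (Fin d) => (1 : ℂ)) :=
  ⟨1, 0, 1, fun ξ => by simp⟩

lemma TrigP.pow {d : ℕ} {q : EuclideanSpace ℝ (Fin d) → ℂ} (hq : TrigP q) (n : ℕ) :
    TrigP (fun ξ => q ξ ^ n) := by
  induction n with
  | zero => simpa using TrigP.one
  | succ k ih => simpa only [pow_succ] using ih.mul hq

lemma TrigP.prod {d : ℕ} {ι : Type*} (s : Finset ι) {q : ι → EuclideanSpace ℝ (Fin d) → ℂ}
    (hq : ∀ i, TrigP (q i)) : TrigP (fun ξ => ∏ i ∈ s, q i ξ) := by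
  classical
  induction s using Finset.induction_on with
  | empty => simpa using TrigP.one
  | insert a s ha ih => simpa only [Finset.prod_insert ha] using (hq a).mul ih

lemma TrigP.cos {d : ℕ} (j : Fin d) (a b : ℝ) :
    TrigP (fun ξ : EuclideanSpace ℝ (Fin d) => ((Real.cos (b * (ξ j - a)) : ℝ) : ℂ)) := by
  refine ⟨2, ![EuclideanSpace.single j b, EuclideanSpace.single j (-b)],
    ![Complex.exp (- Complex.I * (b * a)) / 2, Complex.exp (Complex.I * (b * a)) / 2],
    fun ξ => ?_⟩
  simp only [Fin.sum_univ_two, Matrix.cons_val_zero, Matrix.cons_val_one,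
    EuclideanSpace.inner_single_left]
  rw [Complex.ofReal_cos, Complex.cos]
  rw [div_mul_eq_mul_div, div_mul_eq_mul_div, ← Complex.exp_add, ← Complex.exp_add, ← add_div]
  congr 3
  · simp; ring
  · simp; ring

lemma tendsto_cos_pow (t : ℝ) :
    Filter.Tendsto (fun n : ℕ => Real.cos (1 / Real.sqrt n * t) ^ n) Filter.atTop
      (nhds (Real.exp (- (t ^ 2 / 2)))) := by
  have hs : Filter.Tendsto (fun n : ℕ => 1 / Real.sqrt n * t / 2) Filter.atTop (nhds 0) := by
    have h1 : Filter.Tendsto (fun n : ℕ => Real.sqrt n) Filter.atTop Filter.atTop :=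
      Real.tendsto_sqrt_atTop.comp tendsto_natCast_atTop_atTop
    have h2 := ((tendsto_const_nhds (x := (1:ℝ))).div_atTop h1).mul_const (t / 2)
    simpa [mul_div_assoc] using h2
  have h := Real.tendsto_one_add_pow_exp_of_tendsto
    (g := fun n : ℕ => Real.cos (1 / Real.sqrt n * t) - 1) (t := - (t ^ 2 / 2)) ?_
  · simpa using h
  have h3 : Filter.Tendsto (fun n : ℕ => - (t ^ 2 / 2) * Real.sinc (1 / Real.sqrt n * t / 2) ^ 2)
      Filter.atTop (nhds (- (t ^ 2 / 2))) := by
    have := ((Real.continuous_sinc.tendsto 0).comp hs).pow 2 |>.const_mul (- (t ^ 2 / 2))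
    simpa using this
  refine h3.congr' ?_
  filter_upwards [Filter.eventually_gt_atTop 0] with n hn
  have hn' : (0 : ℝ) < n := by exact_mod_cast hn
  rcases eq_or_ne t 0 with rfl | ht
  · simp
  have hsn : 0 < Real.sqrt n := Real.sqrt_pos.mpr hn'
  rw [Real.sinc_of_ne_zero (by positivity)]
  have hc : Real.cos (1 / Real.sqrt n * t) = 1 - 2 * Real.sin (1 / Real.sqrt n * t / 2) ^ 2 := by
    have := Real.cos_sq' (1 / Real.sqrt n * t / 2)
    have h2 := Real.cos_two_mul (1 / Real.sqrt n * t / 2)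
    rw [mul_div_cancel₀ _ two_ne_zero] at h2
    rw [h2, this]; ring
  rw [hc]
  have hsq : (n : ℝ) = Real.sqrt n ^ 2 := (Real.sq_sqrt hn'.le).symm
  generalize Real.sin (1 / Real.sqrt n * t / 2) = S
  rw [hsq]
  rw [Real.sqrt_sq hsn.le]
  field_simp
  ring

lemma gauss_nonneg_of_psd {d : ℕ} {f : EuclideanSpace ℝ (Fin d) → ℝ} (hf : Integrable f)
    (hK : IsPSDKernel (fun x y : EuclideanSpace ℝ (Fin d) =>
      ∫ ξ, Complex.exp (Complex.I * ((inner ℝ (x - y) ξ : ℝ) : ℂ)) * (f ξ : ℂ)))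
    (v : EuclideanSpace ℝ (Fin d)) (s : ℝ) :
    0 ≤ ∫ ξ, Real.exp (- (s ^ 2 * ‖v - ξ‖ ^ 2)) * f ξ := by
  set q : ℕ → EuclideanSpace ℝ (Fin d) → ℝ := fun n ξ =>
    ∏ j, Real.cos (1 / Real.sqrt n * s * (ξ j - v j)) ^ n with hq
  have h1 : ∀ n, 0 ≤ ∫ ξ, q n ξ ^ 2 * f ξ := by
    intro n
    have : TrigP (fun ξ => ((q n ξ : ℝ) : ℂ)) := by
      simp only [hq, Complex.ofReal_prod, Complex.ofReal_pow]
      exact TrigP.prod _ fun j => (TrigP.cos j (v j) _).pow n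
    obtain ⟨m, x, c, h⟩ := this
    have := hK m x c
    rw [quad_form hf, Complex.zero_le_real] at this
    simp_rw [← h] at this
    simpa using this
  have hlim : Filter.Tendsto (fun n => ∫ ξ, q n ξ ^ 2 * f ξ) Filter.atTop
      (nhds (∫ ξ, Real.exp (- (s ^ 2 * ‖v - ξ‖ ^ 2)) * f ξ)) := by
    refine tendsto_integral_of_dominated_convergence (fun ξ => ‖f ξ‖) ?_ hf.norm ?_ ?_
    · intro n
      refine AEStronglyMeasurable.mul ?_ hf.aestronglyMeasurable
      apply Continuous.aestronglyMeasurable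
      simp only [hq]
      fun_prop
    · intro n
      filter_upwards with ξ
      rw [norm_mul]
      refine mul_le_of_le_one_left (norm_nonneg _) ?_
      rw [norm_pow]
      refine pow_le_one₀ (norm_nonneg _) ?_
      simp only [hq, norm_prod]
      refine Finset.prod_le_one (fun _ _ => norm_nonneg _) fun j _ => ?_
      rw [norm_pow]
      exact pow_le_one₀ (norm_nonneg _) (Real.abs_cos_le_one _)
    · filter_upwards with ξ
      refine Filter.Tendsto.mul_const _ ?_
      have h := (tendsto_finsetProd (Finset.univ : Finset (Fin d))
        (fun j _ => tendsto_cos_pow (s * (ξ j - v j)))).pow 2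
      simp only [← mul_assoc] at h
      convert h using 2
      rw [← Real.exp_sum, ← Real.exp_nat_mul, EuclideanSpace.norm_sq_eq]
      congr 1
      rw [Finset.mul_sum, Finset.mul_sum, ← Finset.sum_neg_distrib]
      refine Finset.sum_congr rfl fun j _ => ?_
      simp
      ring
  exact ge_of_tendsto' hlim h1

lemma nonneg_of_psd {d : ℕ} {f : EuclideanSpace ℝ (Fin d) → ℝ} (hf : Integrable f)
    (hc : Continuous f)
    (hK : IsPSDKernel (fun x y : EuclideanSpace ℝ (Fin d) =>
      ∫ ξ, Complex.exp (Complex.I * ((inner ℝ (x - y) ξ : ℝ) : ℂ)) * (f ξ : ℂ)))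
    (v : EuclideanSpace ℝ (Fin d)) : 0 ≤ f v := by
  have h := Real.tendsto_integral_gaussian_smul' (hf.ofReal (𝕜 := ℂ)) (v := v)
    (by fun_prop : Continuous fun ξ => ((f ξ : ℝ) : ℂ)).continuousAt
  have h2 := (Complex.continuous_re.tendsto _).comp h
  refine ge_of_tendsto (h2 : Filter.Tendsto _ _ (nhds (f v))) ?_
  filter_upwards [Filter.eventually_gt_atTop 0] with c hc0
  have h3 := gauss_nonneg_of_psd hf hK v (Real.pi * Real.sqrt c)
  have h4 : (∫ w, ((Real.pi * c : ℂ) ^ (Module.finrank ℝ (EuclideanSpace ℝ (Fin d)) / 2 : ℂ) *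
      Complex.exp (-Real.pi ^ 2 * c * ‖v - w‖ ^ 2)) • ((f w : ℝ) : ℂ)) =
      (((Real.pi * c) ^ (Module.finrank ℝ (EuclideanSpace ℝ (Fin d)) / 2 : ℝ) *
        ∫ ξ, Real.exp (- ((Real.pi * Real.sqrt c) ^ 2 * ‖v - ξ‖ ^ 2)) * f ξ : ℝ) : ℂ) := by
    rw [← integral_const_mul, ← integral_complex_ofReal]
    apply integral_congr_ae
    filter_upwards with w
    rw [mul_pow, Real.sq_sqrt hc0.le, Complex.ofReal_mul, Complex.ofReal_cpow (by positivity)]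
    push_cast
    rw [smul_eq_mul, mul_assoc]
    ring_nf
  simp only [Function.comp]
  erw [h4]
  rw [Complex.ofReal_re]
  positivity

lemma glasser {a : ℝ} (ha : 0 < a) :
    ∫ u in Set.Ioi (0 : ℝ), Real.exp (- (u - a / u) ^ 2) = Real.sqrt Real.pi / 2 := by
  have hder : ∀ u ∈ Set.Ioi (0 : ℝ), HasDerivWithinAt (fun u => u - a / u) (1 + a / u ^ 2)
      (Set.Ioi 0) u := by
    intro u hu
    have hu' : u ≠ 0 := ne_of_gt hu
    have := (hasDerivAt_id u).sub ((hasDerivAt_const u a).div (hasDerivAt_id u) hu')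
    refine (this.congr_deriv ?_).hasDerivWithinAt
    simp
    ring
  have hinj : Set.InjOn (fun u => u - a / u) (Set.Ioi (0 : ℝ)) := by
    have : StrictMonoOn (fun u => u - a / u) (Set.Ioi (0 : ℝ)) := by
      intro u hu v hv huv
      have : a / v < a / u := div_lt_div_of_pos_left ha hu huv
      beta_reduce
      linarith
    exact this.injOn
  have himg : (fun u => u - a / u) '' (Set.Ioi (0 : ℝ)) = Set.univ := by
    rw [Set.eq_univ_iff_forall]
    intro y
    have hs : Real.sqrt (y ^ 2 + 4 * a) ^ 2 = y ^ 2 + 4 * a := Real.sq_sqrt (by positivity)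
    have hlt : |y| < Real.sqrt (y ^ 2 + 4 * a) := by
      rw [← Real.sqrt_sq_eq_abs]
      exact Real.sqrt_lt_sqrt (by positivity) (by linarith)
    have hpos : 0 < y + Real.sqrt (y ^ 2 + 4 * a) := by
      have := neg_abs_le y
      linarith
    refine ⟨(y + Real.sqrt (y ^ 2 + 4 * a)) / 2, ?_, ?_⟩
    · simp only [Set.mem_Ioi]; positivity
    · beta_reduce
      field_simp
      nlinarith
  have hg : Integrable (fun y : ℝ => Real.exp (- y ^ 2)) := by
    simpa using integrable_exp_neg_mul_sq (b := 1) one_pos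
  have e1 : ∫ u in Set.Ioi (0 : ℝ), |1 + a / u ^ 2| • Real.exp (- (u - a / u) ^ 2)
      = Real.sqrt Real.pi := by
    rw [← integral_image_eq_integral_abs_deriv_smul measurableSet_Ioi hder hinj
      (fun y => Real.exp (- y ^ 2)), himg, Measure.restrict_univ]
    simpa using integral_gaussian 1
  have i1 : IntegrableOn (fun u => |1 + a / u ^ 2| • Real.exp (- (u - a / u) ^ 2)) (Set.Ioi 0) := by
    rw [← integrableOn_image_iff_integrableOn_abs_deriv_smul measurableSet_Ioi hder hinj
      (fun y => Real.exp (- y ^ 2)), himg, integrableOn_univ]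
    exact hg
  have hm : AEStronglyMeasurable (fun u : ℝ => Real.exp (- (u - a / u) ^ 2))
      (volume.restrict (Set.Ioi 0)) := by
    apply Measurable.aestronglyMeasurable
    fun_prop
  have i2 : IntegrableOn (fun u => Real.exp (- (u - a / u) ^ 2)) (Set.Ioi 0) := by
    refine Integrable.mono' i1 hm ?_
    filter_upwards with u
    rw [Real.norm_eq_abs, Real.abs_exp, smul_eq_mul]
    refine le_mul_of_one_le_left (Real.exp_pos _).le ?_
    rw [abs_of_nonneg (by positivity)]
    have : 0 ≤ a / u ^ 2 := by positivity
    linarith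
  -- inversion
  have hder2 : ∀ u ∈ Set.Ioi (0 : ℝ), HasDerivWithinAt (fun u => a / u) (- (a / u ^ 2))
      (Set.Ioi 0) u := by
    intro u hu
    have hu' : u ≠ 0 := ne_of_gt hu
    have := (hasDerivAt_const u a).div (hasDerivAt_id u) hu'
    refine (this.congr_deriv ?_).hasDerivWithinAt
    simp
    ring
  have hinj2 : Set.InjOn (fun u => a / u) (Set.Ioi (0 : ℝ)) := by
    intro u hu v hv huv
    have hu' : u ≠ 0 := ne_of_gt hu
    have hv' : v ≠ 0 := ne_of_gt hv
    beta_reduce at huv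
    field_simp at huv
    exact huv.symm
  have himg2 : (fun u => a / u) '' (Set.Ioi (0 : ℝ)) = Set.Ioi 0 := by
    ext y
    constructor
    · rintro ⟨u, hu, rfl⟩
      exact div_pos ha hu
    · intro hy
      have hy' : y ≠ 0 := ne_of_gt hy
      refine ⟨a / y, div_pos ha hy, ?_⟩
      beta_reduce
      field_simp
  have e2 : ∫ u in Set.Ioi (0 : ℝ), |-(a / u ^ 2)| • Real.exp (- (u - a / u) ^ 2)
      = ∫ u in Set.Ioi (0 : ℝ), Real.exp (- (u - a / u) ^ 2) := by
    have := integral_image_eq_integral_abs_deriv_smul measurableSet_Ioi hder2 hinj2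
      (fun u => Real.exp (- (u - a / u) ^ 2))
    rw [himg2] at this
    rw [this]
    refine setIntegral_congr_fun measurableSet_Ioi fun u hu => ?_
    have hu' : u ≠ 0 := ne_of_gt hu
    congr 2
    field_simp
    ring
  have e3 : ∫ u in Set.Ioi (0 : ℝ), |1 + a / u ^ 2| • Real.exp (- (u - a / u) ^ 2) =
      (∫ u in Set.Ioi (0 : ℝ), Real.exp (- (u - a / u) ^ 2)) +
      ∫ u in Set.Ioi (0 : ℝ), |-(a / u ^ 2)| • Real.exp (- (u - a / u) ^ 2) := by
    have hpt : ∀ u : ℝ, |-(a / u ^ 2)| • Real.exp (- (u - a / u) ^ 2) =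
        |1 + a / u ^ 2| • Real.exp (- (u - a / u) ^ 2) - Real.exp (- (u - a / u) ^ 2) := by
      intro u
      rw [abs_neg, abs_of_nonneg (by positivity), abs_of_nonneg (by positivity)]
      simp only [smul_eq_mul]
      ring
    simp_rw [hpt]
    rw [integral_sub i1 i2]
    ring
  rw [e1, e2] at e3
  linarith

lemma subordination {r : ℝ} (hr : 0 ≤ r) :
    ∫ s in Set.Ioi (0 : ℝ), s ^ (-(1/2) : ℝ) * Real.exp (- s) * Real.exp (- (r ^ 2 / (4 * s))) =
      Real.sqrt Real.pi * Real.exp (- r) := by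
  rcases hr.eq_or_lt with rfl | hr
  · have := Real.Gamma_eq_integral (s := 1/2) (by norm_num)
    rw [Real.Gamma_one_half_eq] at this
    simp only [neg_zero, Real.exp_zero, mul_one]
    rw [this]
    refine setIntegral_congr_fun measurableSet_Ioi fun u hu => ?_
    beta_reduce
    rw [mul_comm]
    norm_num
    ring
  rw [← integral_comp_rpow_Ioi_of_pos (p := 2) (by norm_num)]
  have h := glasser (a := r / 2) (by positivity)
  have : Real.sqrt Real.pi * Real.exp (- r) =
      ∫ u in Set.Ioi (0 : ℝ), 2 * Real.exp (-r) * Real.exp (- (u - (r / 2) / u) ^ 2) := by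
    rw [integral_const_mul, h]; ring
  rw [this]
  refine setIntegral_congr_fun measurableSet_Ioi fun u hu => ?_
  have hu' : 0 < u := hu
  simp only [smul_eq_mul]
  rw [← Real.rpow_mul hu'.le, mul_assoc _ (Real.exp _) (Real.exp _), mul_assoc, mul_assoc,
    ← Real.exp_add, ← Real.exp_add, ← mul_assoc (u ^ _), ← Real.rpow_add hu']
  norm_num
  field_simp
  ring

/-- Unnormalised Gaussian mixture. -/
noncomputable def mixG (d : ℕ) (σ : ℝ) (s : ℝ) (ξ : EuclideanSpace ℝ (Fin d)) : ℝ :=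
  s ^ (-(1/2) : ℝ) * Real.exp (- s) * (s ^ ((d : ℝ) / 2) * Real.exp (- (s * σ ^ 2 * ‖ξ‖ ^ 2)))

lemma mixG_fourier {d : ℕ} {σ : ℝ} (hσ : 0 < σ) {s : ℝ} (hs : 0 < s)
    (x : EuclideanSpace ℝ (Fin d)) :
    ∫ ξ, Complex.exp (Complex.I * ((inner ℝ x ξ : ℝ) : ℂ)) * (mixG d σ s ξ : ℂ) =
      (((Real.pi / σ ^ 2) ^ ((d : ℝ) / 2) * (s ^ (-(1/2) : ℝ) * Real.exp (- s) *
        Real.exp (- ((‖x‖ / σ) ^ 2 / (4 * s)))) : ℝ) : ℂ) := by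
  have h := GaussianFourier.integral_cexp_neg_mul_sq_norm_add (b := ((s * σ ^ 2 : ℝ) : ℂ))
    (by rw [Complex.ofReal_re]; positivity) Complex.I x
  have e : ∀ ξ : EuclideanSpace ℝ (Fin d),
      Complex.exp (Complex.I * ((inner ℝ x ξ : ℝ) : ℂ)) * (mixG d σ s ξ : ℂ) =
      ((s ^ (-(1/2) : ℝ) * Real.exp (- s) * s ^ ((d : ℝ) / 2) : ℝ) : ℂ) *
      Complex.exp (-((s * σ ^ 2 : ℝ) : ℂ) * ‖ξ‖ ^ 2 + Complex.I * (inner ℝ x ξ : ℝ)) := by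
    intro ξ
    rw [Complex.exp_add, mixG]
    push_cast
    ring_nf
  simp_rw [e]
  rw [integral_const_mul]
  erw [h]
  rw [finrank_euclideanSpace_fin, Complex.I_sq]
  have e2 : ((Real.pi : ℂ) / ((s * σ ^ 2 : ℝ) : ℂ)) ^ ((d : ℂ) / 2) =
      (((Real.pi / (s * σ ^ 2)) ^ ((d : ℝ) / 2) : ℝ) : ℂ) := by
    rw [Complex.ofReal_cpow (by positivity)]
    push_cast
    rfl
  have e3 : Complex.exp (-1 * (‖x‖ : ℂ) ^ 2 / (4 * ((s * σ ^ 2 : ℝ) : ℂ))) =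
      ((Real.exp (- ((‖x‖ / σ) ^ 2 / (4 * s))) : ℝ) : ℂ) := by
    rw [Complex.ofReal_exp]
    congr 1
    push_cast
    field_simp
  rw [e2, e3, ← Complex.ofReal_mul, ← Complex.ofReal_mul]
  congr 1
  have : s ^ ((d : ℝ) / 2) * (Real.pi / (s * σ ^ 2)) ^ ((d : ℝ) / 2) =
      (Real.pi / σ ^ 2) ^ ((d : ℝ) / 2) := by
    rw [← Real.mul_rpow hs.le (by positivity)]
    congr 1
    field_simp
  rw [← this]
  ring

lemma mixG_nonneg {d : ℕ} {σ s : ℝ} (hs : 0 < s) (ξ : EuclideanSpace ℝ (Fin d)) :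
    0 ≤ mixG d σ s ξ := by
  unfold mixG; positivity

lemma mixG_integral {d : ℕ} {σ : ℝ} (hσ : 0 < σ) {s : ℝ} (hs : 0 < s) :
    ∫ ξ, mixG d σ s ξ = (Real.pi / σ ^ 2) ^ ((d : ℝ) / 2) * (s ^ (-(1/2) : ℝ) * Real.exp (- s)) := by
  have h := mixG_fourier (d := d) hσ hs 0
  simp only [inner_zero_left, Complex.ofReal_zero, mul_zero, Complex.exp_zero, one_mul] at h
  rw [integral_complex_ofReal] at h
  have := Complex.ofReal_injective h
  rw [this]
  simp

lemma mixG_integrable {d : ℕ} {σ : ℝ} (hσ : 0 < σ) {s : ℝ} (hs : 0 < s) :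
    Integrable (mixG d σ s) := by
  by_contra hn
  have h := mixG_integral (d := d) hσ hs
  rw [integral_undef hn] at h
  have : 0 < (Real.pi / σ ^ 2) ^ ((d : ℝ) / 2) * (s ^ (-(1/2) : ℝ) * Real.exp (- s)) := by
    positivity
  linarith

lemma mixG_prod_integrable {d : ℕ} {σ : ℝ} (hσ : 0 < σ) :
    Integrable (Function.uncurry (mixG d σ))
      ((volume.restrict (Set.Ioi (0 : ℝ))).prod volume) := by
  have hm : Measurable (Function.uncurry (mixG d σ)) := by
    unfold mixG Function.uncurry
    fun_prop
  rw [integrable_prod_iff hm.aestronglyMeasurable]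
  constructor
  · filter_upwards [ae_restrict_mem measurableSet_Ioi] with s hs
    exact mixG_integrable hσ hs
  · have h1 : IntegrableOn (fun s : ℝ => (Real.pi / σ ^ 2) ^ ((d : ℝ) / 2) *
        (s ^ (-(1/2) : ℝ) * Real.exp (- s))) (Set.Ioi 0) := by
      refine Integrable.const_mul ?_ _
      have := Real.GammaIntegral_convergent (s := 1/2) (by norm_num)
      refine this.congr ?_
      filter_upwards with s
      rw [mul_comm]
      norm_num
    refine Integrable.congr h1 ?_
    filter_upwards [ae_restrict_mem measurableSet_Ioi] with s hs
    rw [← mixG_integral hσ hs]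
    congr with ξ
    simp only [Function.uncurry]
    rw [Real.norm_of_nonneg (mixG_nonneg hs ξ)]

lemma mixG_integral_s {d : ℕ} {σ : ℝ} (ξ : EuclideanSpace ℝ (Fin d)) :
    ∫ s in Set.Ioi (0 : ℝ), mixG d σ s ξ =
      (1 / (1 + σ ^ 2 * ‖ξ‖ ^ 2)) ^ (((d : ℝ) + 1) / 2) * Real.Gamma (((d : ℝ) + 1) / 2) := by
  rw [← Real.integral_rpow_mul_exp_neg_mul_Ioi (by positivity) (by positivity)]
  refine setIntegral_congr_fun measurableSet_Ioi fun s hs => ?_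
  have hs' : 0 < s := hs
  unfold mixG
  have h1 : s ^ (((d : ℝ) + 1) / 2 - 1) = s ^ (-(1/2) : ℝ) * s ^ ((d : ℝ) / 2) := by
    rw [← Real.rpow_add hs']
    congr 1
    ring
  have h2 : Real.exp (-((1 + σ ^ 2 * ‖ξ‖ ^ 2) * s)) =
      Real.exp (- s) * Real.exp (- (s * σ ^ 2 * ‖ξ‖ ^ 2)) := by
    rw [← Real.exp_add]
    congr 1
    ring
  rw [h1, h2]
  ring

/-- The Fourier density of the exponential kernel. -/
noncomputable def expDensity (d : ℕ) (σ : ℝ) (ξ : EuclideanSpace ℝ (Fin d)) : ℝ :=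
  σ ^ d / Real.pi ^ (((d : ℝ) + 1) / 2) *
    ((1 / (1 + σ ^ 2 * ‖ξ‖ ^ 2)) ^ (((d : ℝ) + 1) / 2) * Real.Gamma (((d : ℝ) + 1) / 2))

lemma expDensity_integrable {d : ℕ} {σ : ℝ} (hσ : 0 < σ) : Integrable (expDensity d σ) := by
  unfold expDensity
  refine Integrable.const_mul ?_ _
  have := (mixG_prod_integrable (d := d) hσ).integral_prod_right
  refine this.congr ?_
  filter_upwards with ξ
  exact mixG_integral_s ξ

lemma expDensity_continuous {d : ℕ} {σ : ℝ} : Continuous (expDensity d σ) := by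
  unfold expDensity
  refine Continuous.mul continuous_const (Continuous.mul ?_ continuous_const)
  refine Continuous.rpow_const ?_ (fun ξ => Or.inr (by positivity))
  refine Continuous.div continuous_const (by fun_prop) fun ξ => by positivity

lemma l2expK_eq {d : ℕ} {σ : ℝ} (hσ : 0 < σ) (x y : EuclideanSpace ℝ (Fin d)) :
    l2expK d σ x y =
    ∫ ξ, Complex.exp (Complex.I * ((inner ℝ (x - y) ξ : ℝ) : ℂ)) * (expDensity d σ ξ : ℂ) := by
  set z := x - y with hz
  set A := σ ^ d / Real.pi ^ (((d : ℝ) + 1) / 2) with hA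
  have h1 : ∀ ξ : EuclideanSpace ℝ (Fin d),
      Complex.exp (Complex.I * ((inner ℝ z ξ : ℝ) : ℂ)) * (expDensity d σ ξ : ℂ) =
      (A : ℂ) * ∫ s in Set.Ioi (0 : ℝ),
        Complex.exp (Complex.I * ((inner ℝ z ξ : ℝ) : ℂ)) * (mixG d σ s ξ : ℂ) := by
    intro ξ
    rw [integral_const_mul, integral_complex_ofReal, mixG_integral_s, expDensity, ← hA]
    push_cast
    ring
  simp_rw [h1]
  rw [integral_const_mul, integral_integral_swap]
  swap
  · have h := (mixG_prod_integrable (d := d) hσ).swap.ofReal (𝕜 := ℂ)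
    have h2 := h.bdd_mul (c := 1) (f := fun p : EuclideanSpace ℝ (Fin d) × ℝ =>
      Complex.exp (Complex.I * ((inner ℝ z p.1 : ℝ) : ℂ))) ?_ ?_
    · exact h2
    · apply Continuous.aestronglyMeasurable
      fun_prop
    · filter_upwards with p
      rw [mul_comm, Complex.norm_exp_ofReal_mul_I]
  rw [setIntegral_congr_fun measurableSet_Ioi fun s hs => mixG_fourier hσ hs z]
  rw [integral_complex_ofReal, integral_const_mul, subordination (by positivity), l2expK,
    ← Complex.ofReal_mul]
  congr 1
  have hAB : A * ((Real.pi / σ ^ 2) ^ ((d : ℝ) / 2) * Real.sqrt Real.pi) = 1 := by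
    rw [hA, Real.div_rpow Real.pi_pos.le (by positivity), ← Real.rpow_natCast σ 2,
      ← Real.rpow_mul hσ.le, add_div, Real.rpow_add Real.pi_pos, Real.sqrt_eq_rpow]
    rw [show ((2 : ℕ) : ℝ) * ((d : ℝ) / 2) = d by push_cast; ring, Real.rpow_natCast]
    field_simp
  rw [neg_div, ← hz]
  linear_combination - Real.exp (-(‖z‖ / σ)) * hAB

lemma bsplineDensity_eq (d p : ℕ) (ξ : EuclideanSpace ℝ (Fin d)) :
    bsplineDensity d p ξ = (2 * Real.pi) ^ (-(d : ℤ)) * ∏ j, Real.sinc (ξ j / 2) ^ p := by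
  unfold bsplineDensity
  congr 1
  refine Finset.prod_congr rfl fun j _ => ?_
  rw [Real.sinc_apply]
  simp

lemma bsplineDensity_continuous (d p : ℕ) : Continuous (bsplineDensity d p) := by
  have : bsplineDensity d p = fun ξ : EuclideanSpace ℝ (Fin d) =>
      (2 * Real.pi) ^ (-(d : ℤ)) * ∏ j, Real.sinc (ξ j / 2) ^ p := by
    ext ξ; exact bsplineDensity_eq d p ξ
  rw [this]
  have := Real.continuous_sinc
  fun_prop

lemma sinc_mul_self (t : ℝ) : t * Real.sinc t = Real.sin t := by
  rcases eq_or_ne t 0 with rfl | h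
  · simp
  · rw [Real.sinc_of_ne_zero h]; field_simp

lemma sinc_pow_integrable {p : ℕ} (hp : Even p) (hp0 : 0 < p) :
    Integrable (fun t : ℝ => Real.sinc (t / 2) ^ p) := by
  refine Integrable.mono' (g := fun t => 5 * (1 + t ^ 2)⁻¹)
    (integrable_inv_one_add_sq.const_mul 5) ?_ ?_
  · apply Continuous.aestronglyMeasurable
    have := Real.continuous_sinc
    fun_prop
  · filter_upwards with t
    have hp2 : 2 ≤ p := by obtain ⟨k, rfl⟩ := hp; omega
    have h1 : |Real.sinc (t / 2)| ≤ 1 := Real.abs_sinc_le_one _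
    have h2 : ‖Real.sinc (t / 2) ^ p‖ ≤ Real.sinc (t / 2) ^ 2 := by
      rw [norm_pow, Real.norm_eq_abs, ← sq_abs (Real.sinc (t / 2))]
      exact pow_le_pow_of_le_one (abs_nonneg _) h1 hp2
    refine h2.trans ?_
    rw [← div_eq_mul_inv, le_div_iff₀ (by positivity)]
    have h3 := sinc_mul_self (t / 2)
    have h4 := Real.sin_sq_le_one (t / 2)
    have h5 : Real.sinc (t / 2) ^ 2 ≤ 1 := by rw [← sq_abs]; exact pow_le_one₀ (abs_nonneg _) h1
    rw [← h3] at h4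
    nlinarith

lemma bsplineDensity_integrable {d p : ℕ} (hp : Even p) (hp0 : 0 < p) :
    Integrable (bsplineDensity d p) := by
  have : bsplineDensity d p = fun ξ : EuclideanSpace ℝ (Fin d) =>
      (2 * Real.pi) ^ (-(d : ℤ)) * ∏ j, Real.sinc (ξ j / 2) ^ p := by
    ext ξ; exact bsplineDensity_eq d p ξ
  rw [this]
  refine Integrable.const_mul ?_ _
  rw [← (PiLp.volume_preserving_toLp (Fin d)).integrable_comp_emb
    (MeasurableEquiv.toLp 2 (Fin d → ℝ)).measurableEmbedding]
  exact Integrable.fintype_prod (f := fun _ t => Real.sinc (t / 2) ^ p)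
    (fun _ => sinc_pow_integrable hp hp0)

lemma lincomb_kernel {d : ℕ} {f g : EuclideanSpace ℝ (Fin d) → ℝ} (hf : Integrable f)
    (hg : Integrable g) (l : ℝ) (z : EuclideanSpace ℝ (Fin d)) :
    (l : ℂ) * (∫ ξ, Complex.exp (Complex.I * ((inner ℝ z ξ : ℝ) : ℂ)) * (f ξ : ℂ)) -
      (∫ ξ, Complex.exp (Complex.I * ((inner ℝ z ξ : ℝ) : ℂ)) * (g ξ : ℂ)) =
    ∫ ξ, Complex.exp (Complex.I * ((inner ℝ z ξ : ℝ) : ℂ)) * ((l * f ξ - g ξ : ℝ) : ℂ) := by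
  have hint : ∀ f : EuclideanSpace ℝ (Fin d) → ℝ, Integrable f → Integrable (fun ξ =>
      Complex.exp (Complex.I * ((inner ℝ z ξ : ℝ) : ℂ)) * (f ξ : ℂ)) := by
    intro f hf
    refine (hf.ofReal (𝕜 := ℂ)).bdd_mul (c := 1) ?_ ?_
    · apply Continuous.aestronglyMeasurable
      fun_prop
    · filter_upwards with ξ
      rw [mul_comm, Complex.norm_exp_ofReal_mul_I]
  rw [← integral_const_mul, ← integral_sub ((hint f hf).const_mul _) (hint g hg)]
  congr with ξ
  push_cast
  ring

lemma psd_iff {d : ℕ} {f g : EuclideanSpace ℝ (Fin d) → ℝ} (hf : Integrable f)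
    (hg : Integrable g) (cf : Continuous f) (cg : Continuous g) (l : ℝ) :
    IsPSDKernel (fun x y : EuclideanSpace ℝ (Fin d) =>
      (l : ℂ) * (∫ ξ, Complex.exp (Complex.I * ((inner ℝ (x - y) ξ : ℝ) : ℂ)) * (f ξ : ℂ)) -
      (∫ ξ, Complex.exp (Complex.I * ((inner ℝ (x - y) ξ : ℝ) : ℂ)) * (g ξ : ℂ))) ↔
    ∀ ξ, g ξ ≤ l * f ξ := by
  simp_rw [lincomb_kernel hf hg]
  have hi : Integrable (fun ξ => l * f ξ - g ξ) := (hf.const_mul l).sub hg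
  constructor
  · intro h ξ
    have := nonneg_of_psd hi (by fun_prop) h ξ
    linarith
  · intro h
    exact psd_of_nonneg hi fun ξ => by linarith [h ξ]

lemma psd_iff_a {d p : ℕ} (hp : Even p) (hp0 : 0 < p) {σ : ℝ} (hσ : 0 < σ) (l : ℝ) :
    IsPSDKernel (fun x y : EuclideanSpace ℝ (Fin d) =>
      (l : ℂ) * bsplineK d p x y - l2expK d σ x y) ↔
    ∀ ξ, expDensity d σ ξ ≤ l * bsplineDensity d p ξ := by
  simp_rw [l2expK_eq hσ, bsplineK]
  exact psd_iff (bsplineDensity_integrable hp hp0) (expDensity_integrable hσ)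
    (bsplineDensity_continuous d p) expDensity_continuous l

lemma psd_iff_b {d p : ℕ} (hp : Even p) (hp0 : 0 < p) {σ : ℝ} (hσ : 0 < σ) (l : ℝ) :
    IsPSDKernel (fun x y : EuclideanSpace ℝ (Fin d) =>
      (l : ℂ) * l2expK d σ x y - bsplineK d p x y) ↔
    ∀ ξ, bsplineDensity d p ξ ≤ l * expDensity d σ ξ := by
  simp_rw [l2expK_eq hσ, bsplineK]
  exact psd_iff (expDensity_integrable hσ) (bsplineDensity_integrable hp hp0)
    expDensity_continuous (bsplineDensity_continuous d p) l

lemma expDensity_pos {d : ℕ} {σ : ℝ} (hσ : 0 < σ) (ξ : EuclideanSpace ℝ (Fin d)) :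
    0 < expDensity d σ ξ := by
  unfold expDensity
  have : 0 < Real.Gamma (((d : ℝ) + 1) / 2) := Real.Gamma_pos_of_pos (by positivity)
  positivity

lemma bsplineDensity_single {d p : ℕ} (hd : 0 < d) (t : ℝ) :
    bsplineDensity d p (EuclideanSpace.single ⟨0, hd⟩ t) =
      (2 * Real.pi) ^ (-(d : ℤ)) * Real.sinc (t / 2) ^ p := by
  rw [bsplineDensity_eq]
  congr 1
  rw [Finset.prod_eq_single ⟨0, hd⟩]
  · simp
  · intro j _ hj
    simp [hj]
  · simp

lemma part_a {d p : ℕ} (hd : 0 < d) (hp : Even p) (hp0 : 0 < p) {σ : ℝ} (hσ : 0 < σ) :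
    ¬ ∃ lam : ℝ, 0 ≤ lam ∧
        IsPSDKernel (fun x y : EuclideanSpace ℝ (Fin d) =>
          (lam : ℂ) * bsplineK d p x y - l2expK d σ x y) := by
  rintro ⟨l, -, h⟩
  rw [psd_iff_a hp hp0 hσ] at h
  have h1 := h (EuclideanSpace.single ⟨0, hd⟩ (2 * Real.pi))
  have h2 := expDensity_pos hσ (EuclideanSpace.single ⟨0, hd⟩ (2 * Real.pi))
  rw [bsplineDensity_single, mul_div_cancel_left₀ _ two_ne_zero,
    Real.sinc_of_ne_zero Real.pi_ne_zero] at h1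
  simp [hp0.ne'] at h1
  linarith

lemma part_b {d p : ℕ} (hd : 0 < d) (hp : Even p) {σ : ℝ} (hσ : 0 < σ) {l : ℝ}
    (hl : 0 ≤ l)
    (h : ∀ ξ, bsplineDensity d p ξ ≤ l * expDensity d σ ξ) : d + 1 ≤ p := by
  by_contra hlt
  push Not at hlt
  set C : ℝ := l * (σ ^ d / Real.pi ^ (((d : ℝ) + 1) / 2) * Real.Gamma (((d : ℝ) + 1) / 2))
    with hC
  have hG : 0 < Real.Gamma (((d : ℝ) + 1) / 2) := Real.Gamma_pos_of_pos (by positivity)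
  have hC0 : 0 ≤ C := by positivity
  set b : ℝ := (2 * Real.pi) ^ (-(d : ℤ)) * 2 ^ p with hb
  have hb0 : 0 < b := by positivity
  have key : ∀ n : ℕ, b * (n : ℝ) ≤ C / σ ^ (d + 1) := by
    intro n
    set t : ℝ := 2 * (n * Real.pi + Real.pi / 2) with ht
    have hpi := Real.pi_gt_three
    have hn0 : (0 : ℝ) ≤ n := Nat.cast_nonneg n
    have htn : (n : ℝ) ≤ t := by nlinarith
    have ht1 : 1 ≤ t := by nlinarith
    have ht0 : 0 < t := by linarith
    have h1 := h (EuclideanSpace.single ⟨0, hd⟩ t)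
    rw [bsplineDensity_single, Real.sinc_of_ne_zero (by positivity)] at h1
    have hsin : Real.sin (t / 2) ^ p = 1 := by
      rw [ht, mul_div_cancel_left₀ _ two_ne_zero, Real.sin_add_pi_div_two, Real.cos_nat_mul_pi,
        ← pow_mul, mul_comm, pow_mul, hp.neg_one_pow, one_pow]
    rw [div_pow, hsin, expDensity, EuclideanSpace.norm_single] at h1
    have h2 : (1 / (1 + σ ^ 2 * ‖t‖ ^ 2)) ^ (((d : ℝ) + 1) / 2) ≤ 1 / (σ * t) ^ (d + 1) := by
      rw [Real.norm_of_nonneg ht0.le, Real.div_rpow zero_le_one (by positivity), Real.one_rpow]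
      apply one_div_le_one_div_of_le (by positivity)
      have : (σ * t) ^ (d + 1) = ((σ * t) ^ 2) ^ (((d : ℝ) + 1) / 2) := by
        rw [← Real.rpow_natCast _ 2, ← Real.rpow_mul (by positivity), ← Real.rpow_natCast]
        congr 1
        push_cast
        ring
      rw [this]
      apply Real.rpow_le_rpow (by positivity) _ (by positivity)
      nlinarith
    have h3 : b / t ^ p ≤ C * (1 / (σ * t) ^ (d + 1)) := by
      refine le_trans (le_of_eq ?_) (h1.trans ?_)
      · rw [hb, div_pow]; field_simp
      · rw [hC]
        calc _ = l * (σ ^ d / Real.pi ^ (((d : ℝ) + 1) / 2) * Real.Gamma (((d : ℝ) + 1) / 2)) *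
              (1 / (1 + σ ^ 2 * ‖t‖ ^ 2)) ^ (((d : ℝ) + 1) / 2) := by ring
          _ ≤ _ := by gcongr
    have h4 : t ^ (d + 1) = t ^ p * t ^ (d + 1 - p) := by
      rw [← pow_add]; congr 1; omega
    have h5 : t ≤ t ^ (d + 1 - p) := le_self_pow₀ ht1 (by omega)
    have h6 : b * t ^ (d + 1 - p) ≤ C / σ ^ (d + 1) := by
      rw [mul_pow σ t, h4] at h3
      have := mul_le_mul_of_nonneg_right h3 (by positivity : 0 ≤ t ^ p * t ^ (d + 1 - p))
      have hP : t ^ p ≠ 0 := by positivity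
      have hQ : t ^ (d + 1 - p) ≠ 0 := by positivity
      have hS : σ ^ (d + 1) ≠ 0 := by positivity
      generalize t ^ p = P at this hP
      generalize t ^ (d + 1 - p) = Q at this hQ ⊢
      generalize σ ^ (d + 1) = S at this hS ⊢
      clear_value b C
      have u1 : b / P * (P * Q) = b * Q := by field_simp
      have u2 : C * (1 / (S * (P * Q))) * (P * Q) = C / S := by field_simp
      rw [u1, u2] at this
      exact this
    calc b * n ≤ b * t ^ (d + 1 - p) := by gcongr; linarith
      _ ≤ _ := h6
  obtain ⟨n, hn⟩ := exists_nat_gt (C / σ ^ (d + 1) / b)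
  rw [div_lt_iff₀ hb0] at hn
  have := key n
  linarith

lemma part_c {d p : ℕ} (hd : 0 < d) (hp : Even p) {σ : ℝ} (hσ : 0 < σ)
    (hdp : d + 1 ≤ p) (ξ : EuclideanSpace ℝ (Fin d)) :
    bsplineDensity d p ξ ≤ (2 : ℝ) ^ (p - d) / (σ ^ d * Real.pi ^ (((d : ℝ) - 1) / 2)) *
            ((1 + σ ^ 2 * d) ^ (((d : ℝ) + 1) / 2) / Real.Gamma (((d : ℝ) + 1) / 2)) *
            expDensity d σ ξ := by
  have hG : 0 < Real.Gamma (((d : ℝ) + 1) / 2) := Real.Gamma_pos_of_pos (by positivity)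
  have hmain : ∏ j, Real.sinc (ξ j / 2) ^ p ≤ 2 ^ p * ((1 + σ ^ 2 * d) ^ (((d : ℝ) + 1) / 2) *
      (1 / (1 + σ ^ 2 * ‖ξ‖ ^ 2)) ^ (((d : ℝ) + 1) / 2)) := by
    haveI : Nonempty (Fin d) := ⟨⟨0, hd⟩⟩
    obtain ⟨j0, hj0⟩ := Finite.exists_max (fun j => |ξ j|)
    set M := |ξ j0| with hM
    have hM0 : 0 ≤ M := abs_nonneg _
    have hnorm : ‖ξ‖ ^ 2 ≤ d * M ^ 2 := by
      rw [EuclideanSpace.norm_sq_eq]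
      calc _ ≤ ∑ _j : Fin d, M ^ 2 := by
            refine Finset.sum_le_sum fun j _ => ?_
            rw [Real.norm_eq_abs]
            exact pow_le_pow_left₀ (abs_nonneg _) (hj0 j) 2
        _ = _ := by simp
    have hfac : ∀ j, Real.sinc (ξ j / 2) ^ p ≤ 1 := fun j => by
      rw [← hp.pow_abs]; exact pow_le_one₀ (abs_nonneg _) (Real.abs_sinc_le_one _)
    have hfac0 : ∀ j, 0 ≤ Real.sinc (ξ j / 2) ^ p := fun j => hp.pow_nonneg _
    have hprod : ∏ j, Real.sinc (ξ j / 2) ^ p ≤ Real.sinc (ξ j0 / 2) ^ p := by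
      rw [← Finset.mul_prod_erase _ _ (Finset.mem_univ j0)]
      exact mul_le_of_le_one_right (hfac0 _)
        (Finset.prod_le_one (fun j _ => hfac0 j) fun j _ => hfac j)
    rw [Real.div_rpow zero_le_one (by positivity), Real.one_rpow, mul_one_div, mul_div_assoc',
      le_div_iff₀ (by positivity)]
    rcases le_total M 1 with h1 | h1
    · have e1 : (1 + σ ^ 2 * ‖ξ‖ ^ 2) ^ (((d : ℝ) + 1) / 2) ≤
          (1 + σ ^ 2 * d) ^ (((d : ℝ) + 1) / 2) := by
        apply Real.rpow_le_rpow (by positivity) _ (by positivity)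
        gcongr
        refine hnorm.trans (mul_le_of_le_one_right (by positivity) (pow_le_one₀ hM0 h1))
      have e2 : ∏ j, Real.sinc (ξ j / 2) ^ p ≤ 2 ^ p :=
        (hprod.trans (hfac j0)).trans (one_le_pow₀ (by norm_num))
      exact mul_le_mul e2 e1 (by positivity) (by positivity)
    · have hMpos : 0 < M := by linarith
      have e1 : (1 + σ ^ 2 * ‖ξ‖ ^ 2) ^ (((d : ℝ) + 1) / 2) ≤
          M ^ (d + 1) * (1 + σ ^ 2 * d) ^ (((d : ℝ) + 1) / 2) := by
        have : M ^ (d + 1) = (M ^ 2) ^ (((d : ℝ) + 1) / 2) := by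
          rw [← Real.rpow_natCast _ 2, ← Real.rpow_mul (by positivity), ← Real.rpow_natCast]
          congr 1
          push_cast
          ring
        rw [this, ← Real.mul_rpow (by positivity) (by positivity)]
        apply Real.rpow_le_rpow (by positivity) _ (by positivity)
        have := mul_le_mul_of_nonneg_left hnorm (sq_nonneg σ)
        have h1' : 1 ≤ M ^ 2 := one_le_pow₀ h1
        nlinarith
      have e2 : ∏ j, Real.sinc (ξ j / 2) ^ p ≤ 2 ^ p / M ^ (d + 1) := by
        refine hprod.trans ?_
        have h3 := sinc_mul_self (ξ j0 / 2)
        have h4 : |ξ j0 / 2| * |Real.sinc (ξ j0 / 2)| ≤ 1 := by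
          rw [← abs_mul, h3]; exact Real.abs_sin_le_one _
        rw [abs_div, abs_two, ← hM] at h4
        have h5 : |Real.sinc (ξ j0 / 2)| ≤ 2 / M := by
          rw [le_div_iff₀ hMpos]; linarith
        rw [← hp.pow_abs]
        refine (pow_le_pow_left₀ (abs_nonneg _) h5 p).trans ?_
        rw [div_pow]
        exact div_le_div_of_nonneg_left (by positivity) (by positivity)
          (pow_le_pow_right₀ h1 hdp)
      refine (mul_le_mul e2 e1 (by positivity) (by positivity)).trans (le_of_eq ?_)
      field_simp
  rw [bsplineDensity_eq]
  refine (mul_le_mul_of_nonneg_left hmain (by positivity)).trans (le_of_eq ?_)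
  unfold expDensity
  have e1 : (2 : ℝ) ^ p = 2 ^ (p - d) * 2 ^ d := by rw [← pow_add]; congr 1; omega
  have e2 : Real.pi ^ (((d : ℝ) + 1) / 2) = Real.pi ^ d / Real.pi ^ (((d : ℝ) - 1) / 2) := by
    rw [← Real.rpow_natCast, ← Real.rpow_sub Real.pi_pos]
    congr 1
    ring
  rw [e2, e1, zpow_neg, zpow_natCast, mul_pow]
  field_simp

/-- (a) No `λ ≥ 0` makes `λB_p − ℰ_σ` positive semidefinite; (b) some `λ ≥ 0` makes
`λℰ_σ − B_p` positive semidefinite iff `p ≥ d + 1`; (c) if `p ≥ d + 1` the least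
such `λ` is at most `2^{p−d} (1+σ²d)^{(d+1)/2} / (σ^d π^{(d−1)/2} Γ((d+1)/2))`. -/
theorem bspline_l2exp_inclusion (d p : ℕ) (hd : 0 < d) (hp : Even p) (hp0 : 0 < p)
    (σ : ℝ) (hσ : 0 < σ) :
    (¬ ∃ lam : ℝ, 0 ≤ lam ∧
        IsPSDKernel (fun x y : EuclideanSpace ℝ (Fin d) =>
          (lam : ℂ) * bsplineK d p x y - l2expK d σ x y)) ∧
    ((∃ lam : ℝ, 0 ≤ lam ∧
        IsPSDKernel (fun x y : EuclideanSpace ℝ (Fin d) =>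
          (lam : ℂ) * l2expK d σ x y - bsplineK d p x y)) ↔ d + 1 ≤ p) ∧
    (d + 1 ≤ p →
      sInf {lam : ℝ | 0 ≤ lam ∧
          IsPSDKernel (fun x y : EuclideanSpace ℝ (Fin d) =>
            (lam : ℂ) * l2expK d σ x y - bsplineK d p x y)}
        ≤ (2 : ℝ) ^ (p - d) / (σ ^ d * Real.pi ^ (((d : ℝ) - 1) / 2)) *
            ((1 + σ ^ 2 * d) ^ (((d : ℝ) + 1) / 2) / Real.Gamma (((d : ℝ) + 1) / 2))) := by
  have hc : d + 1 ≤ p → ∀ lam, lam = (2 : ℝ) ^ (p - d) / (σ ^ d * Real.pi ^ (((d : ℝ) - 1) / 2)) *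
            ((1 + σ ^ 2 * d) ^ (((d : ℝ) + 1) / 2) / Real.Gamma (((d : ℝ) + 1) / 2)) →
      0 ≤ lam ∧ IsPSDKernel (fun x y : EuclideanSpace ℝ (Fin d) =>
          (lam : ℂ) * l2expK d σ x y - bsplineK d p x y) := by
    rintro hdp lam rfl
    have hG : 0 < Real.Gamma (((d : ℝ) + 1) / 2) := Real.Gamma_pos_of_pos (by positivity)
    refine ⟨by positivity, ?_⟩
    rw [psd_iff_b hp hp0 hσ]
    exact part_c hd hp hσ hdp
  refine ⟨part_a hd hp hp0 hσ, ⟨?_, fun hdp => ⟨_, hc hdp _ rfl⟩⟩, fun hdp => ?_⟩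
  · rintro ⟨l, hl, h⟩
    rw [psd_iff_b hp hp0 hσ] at h
    exact part_b hd hp hσ hl h
  · exact csInf_le ⟨0, fun l hl => hl.1⟩ (hc hdp _ rfl)
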